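/- (Voronec equations.) Let L(q,q̇,t) be a smooth Lagrangian on ℝⁿ × ℝⁿ × ℝ with n = m + r, F_i(q,q̇,t) smooth generalized forces, and smooth constraints q̇^{m+ν} = Σ_{i=1}^m a_{νi}(q,t) q̇^i + a_ν(q,t), ν = 1,…,r. Define L_c(q, q̇^1,…,q̇^m, t) := L with q̇^{m+ν} substituted by Σ_i a_{νi} q̇^i + a_ν, K_ν := (∂L/∂q̇^{m+ν}) with the same substitution, A^{(ν)}_{ij} := (∂a_{νi}/∂q^j + Σ_μ a_{μj} ∂a_{νi}/∂q^{m+μ}) − (∂a_{νj}/∂q^i + Σ_μ a_{μi} ∂a_{νj}/∂q^{m+μ}), and A^{(ν)}_i := (∂a_{νi}/∂t + Σ_μ a_μ ∂a_{νi}/∂q^{m+μ}) − (∂a_ν/∂q^i + Σ_μ a_{μi} ∂a_ν/∂q^{m+μ}). Then a smooth curve q(t) satisfying the constraints is a motion of the system — i.e. Σ_{i=1}^n (∂L/∂q^i − (d/dt)(∂L/∂q̇^i) + F_i) η^i = 0 for all virtual displacements η with η^{m+ν} = Σ_{i=1}^m a_{νi} η^i — if and only if for i = 1,…,m: (d/dt)(∂L_c/∂q̇^i)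 = ∂L_c/∂q^i + F_i + Σ_{ν=1}^r a_{νi}(∂L_c/∂q^{m+ν} + F_{m+ν}) + Σ_{ν=1}^r K_ν (Σ_{j=1}^m A^{(ν)}_{ij} q̇^j + A^{(ν)}_i), all quantities evaluated along (q(t), q̇^1(t),…,q̇^m(t), t). -/

import Mathlib

open scoped ContDiff

namespace Voronec

variable {m r : ℕ}

/-- Configuration space `ℝⁿ`, `n = m + r`, split into the first `m` coordinates
`(q^1,…,q^m)` and the last `r` coordinates `(q^{m+1},…,q^{m+r})`. -/
abbrev Conf (m r : ℕ) := (Fin m → ℝ) × (Fin r → ℝ)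

/-- Partial derivative `∂f/∂q^i`, `i = 1,…,m`. -/
noncomputable def pdBase (f : Conf m r → ℝ → ℝ) (q : Conf m r) (t : ℝ) (i : Fin m) : ℝ :=
  fderiv ℝ (fun y => f (y, q.2) t) q.1 (Pi.single i 1)

/-- Partial derivative `∂f/∂q^{m+μ}`, `μ = 1,…,r`. -/
noncomputable def pdFib (f : Conf m r → ℝ → ℝ) (q : Conf m r) (t : ℝ) (μ : Fin r) : ℝ :=
  fderiv ℝ (fun w => f (q.1, w) t) q.2 (Pi.single μ 1)

/-- Partial derivative `∂f/∂t`. -/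
noncomputable def pdT (f : Conf m r → ℝ → ℝ) (q : Conf m r) (t : ℝ) : ℝ :=
  deriv (f q) t

/-- Voronec coefficient `A^{(ν)}_{ij}`. -/
noncomputable def coeffA (a : Fin r → Fin m → Conf m r → ℝ → ℝ)
    (ν : Fin r) (i j : Fin m) (q : Conf m r) (t : ℝ) : ℝ :=
  (pdBase (a ν i) q t j + ∑ μ, a μ j q t * pdFib (a ν i) q t μ)
    - (pdBase (a ν j) q t i + ∑ μ, a μ i q t * pdFib (a ν j) q t μ)

/-- Voronec coefficient `A^{(ν)}_i`. -/
noncomputable def coeffA0 (a : Fin r → Fin m → Conf m r → ℝ → ℝ)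
    (a0 : Fin r → Conf m r → ℝ → ℝ) (ν : Fin r) (i : Fin m) (q : Conf m r) (t : ℝ) : ℝ :=
  (pdT (a ν i) q t + ∑ μ, a0 μ q t * pdFib (a ν i) q t μ)
    - (pdBase (a0 ν) q t i + ∑ μ, a μ i q t * pdFib (a0 ν) q t μ)

/-- The constrained velocity: `q̇^{m+ν} = Σ_i a_{νi} q̇^i + a_ν`. -/
def constrVel (a : Fin r → Fin m → Conf m r → ℝ → ℝ) (a0 : Fin r → Conf m r → ℝ → ℝ)
    (q : Conf m r) (v : Fin m → ℝ) (t : ℝ) : Fin r → ℝ :=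
  fun ν => (∑ i, a ν i q t * v i) + a0 ν q t

/-- The constrained Lagrangian `L_c`: `L` with `q̇^{m+ν}` substituted by
`Σ_i a_{νi} q̇^i + a_ν`. -/
def constrLag (L : Conf m r → (Fin m → ℝ) → (Fin r → ℝ) → ℝ → ℝ)
    (a : Fin r → Fin m → Conf m r → ℝ → ℝ) (a0 : Fin r → Conf m r → ℝ → ℝ)
    (q : Conf m r) (v : Fin m → ℝ) (t : ℝ) : ℝ :=
  L q v (constrVel a a0 q v t) t

/-- `K_ν := ∂L/∂q̇^{m+ν}` restricted to the constrained subspace. -/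
noncomputable def coeffK (L : Conf m r → (Fin m → ℝ) → (Fin r → ℝ) → ℝ → ℝ)
    (a : Fin r → Fin m → Conf m r → ℝ → ℝ) (a0 : Fin r → Conf m r → ℝ → ℝ)
    (ν : Fin r) (q : Conf m r) (v : Fin m → ℝ) (t : ℝ) : ℝ :=
  fderiv ℝ (fun w => L q v w t) (constrVel a a0 q v t) (Pi.single ν 1)

/-!
By the chain rule, replacing `L` by `L_c` turns the momentum restricted to virtual displacements
into `∂L_c/∂q̇`, at the price of two terms in which `K = ∂L/∂q̇^{m+ν}` acts: on the variation of the
constrained velocity, and on the time derivative of the virtual displacement. Hence, on a virtual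
displacement, the d'Alembert expression is the one formed with `L_c` plus `K` applied to the
transposition defect `d(δq)/dt - δ(q̇)`. On the `i`-th coordinate displacement this defect is
`Σ_j A^{(ν)}_{ij} q̇^j + A^{(ν)}_i`. The `i`-th Voronec equation therefore says that the d'Alembert
expression vanishes there, and by linearity these `m` displacements suffice.
-/

section Calculus

variable {𝕜 E F G : Type*} [NontriviallyNormedField 𝕜] [NormedAddCommGroup E] [NormedSpace 𝕜 E]
  [NormedAddCommGroup F] [NormedSpace 𝕜 F] [NormedAddCommGroup G] [NormedSpace 𝕜 G]

theorem fderiv_prod_apply {f : E × F → G} {p : E × F} (hf : DifferentiableAt 𝕜 f p)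
    (ξ : E) (ζ : F) :
    fderiv 𝕜 f p (ξ, ζ)
      = fderiv 𝕜 (fun x => f (x, p.2)) p.1 ξ + fderiv 𝕜 (fun y => f (p.1, y)) p.2 ζ := by
  have hleft : HasFDerivAt (fun x => f (x, p.2)) _ p.1 :=
    HasFDerivAt.comp p.1 hf.hasFDerivAt (hasFDerivAt_prodMk_left p.1 p.2)
  have hright : HasFDerivAt (fun y => f (p.1, y)) _ p.2 :=
    HasFDerivAt.comp p.2 hf.hasFDerivAt (hasFDerivAt_prodMk_right p.1 p.2)
  simp [hleft.fderiv, hright.fderiv, ← map_add]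

theorem differentiableAt_slice_left {f : E × F → G} {x : E} {y : F}
    (hf : DifferentiableAt 𝕜 f (x, y)) : DifferentiableAt 𝕜 (fun z => f (z, y)) x :=
  hf.comp x (hasFDerivAt_prodMk_left x y).differentiableAt

theorem fderiv_comp_graph_apply {f : E × F → G} {g : E → F} {x : E}
    (hf : DifferentiableAt 𝕜 f (x, g x)) (hg : DifferentiableAt 𝕜 g x) (ξ : E) :
    fderiv 𝕜 (fun y => f (y, g y)) x ξ = fderiv 𝕜 f (x, g x) (ξ, fderiv 𝕜 g x ξ) := by
  have h : HasFDerivAt (fun y => f (y, g y)) _ x :=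
    HasFDerivAt.comp (f := fun y => (y, g y)) x hf.hasFDerivAt
      ((hasFDerivAt_id x).prodMk hg.hasFDerivAt)
  simp [h.fderiv]

theorem hasDerivAt_along_curve {f : E → 𝕜 → G} {q : 𝕜 → E} {q' : E} {t : 𝕜}
    (hf : DifferentiableAt 𝕜 (fun p : E × 𝕜 => f p.1 p.2) (q t, t)) (hq : HasDerivAt q q' t) :
    HasDerivAt (fun s => f (q s) s) (fderiv 𝕜 (fun x => f x t) (q t) q' + deriv (f (q t)) t) t := by
  have h : HasDerivAt (fun s => f (q s) s) _ t :=
    HasFDerivAt.comp_hasDerivAt (f := fun s => (q s, s)) t hf.hasFDerivAt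
      (hq.prodMk (hasDerivAt_id t))
  simpa [fderiv_prod_apply hf] using h

end Calculus

section StandardBasis

variable {R M ι 𝓕 : Type*} [Semiring R] [AddCommMonoid M] [Module R M] [DecidableEq ι]
  [FunLike 𝓕 (ι → R) M] [LinearMapClass 𝓕 R (ι → R) M]

theorem map_eq_sum_smul_single [Fintype ι] (ℓ : 𝓕) (x : ι → R) :
    ℓ x = ∑ i, x i • ℓ (Pi.single i 1) := by
  conv_lhs => rw [← (Pi.basisFun R ι).sum_repr x]
  simp [map_sum]

theorem forall_map_eq_zero_iff_single [Finite ι] (ℓ : 𝓕) :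
    (∀ x, ℓ x = 0) ↔ ∀ i, ℓ (Pi.single i 1) = 0 := by
  have := Fintype.ofFinite ι
  exact ⟨fun h i => h _, fun h x => by simp [map_eq_sum_smul_single ℓ x, h]⟩

end StandardBasis

section Constraint

variable {a : Fin r → Fin m → Conf m r → ℝ → ℝ} {a0 : Fin r → Conf m r → ℝ → ℝ}

/-- The virtual displacement determined by its first `m` components `η` through the homogenized
constraints `η^{m+ν} = Σ_i a_{νi} η^i`. -/
noncomputable def virtualDisp (a : Fin r → Fin m → Conf m r → ℝ → ℝ) (x : Conf m r) (t : ℝ) :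
    (Fin m → ℝ) →L[ℝ] Conf m r :=
  (ContinuousLinearMap.id ℝ _).prod
    (Matrix.of fun ν i => a ν i x t).mulVecLin.toContinuousLinearMap

theorem virtualDisp_apply (x : Conf m r) (t : ℝ) (η : Fin m → ℝ) :
    virtualDisp a x t η = (η, fun ν => ∑ i, a ν i x t * η i) := rfl

theorem virtualDisp_single (x : Conf m r) (t : ℝ) (i : Fin m) :
    virtualDisp a x t (Pi.single i 1) = (Pi.single i 1, fun ν => a ν i x t) := by
  simp [virtualDisp_apply, Pi.single_apply]

theorem velocity_eq_virtualDisp_add (x : Conf m r) (v : Fin m → ℝ) (t : ℝ) :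
    (v, constrVel a a0 x v t) = virtualDisp a x t v + (0, fun ν => a0 ν x t) :=
  Prod.ext (add_zero v).symm rfl

theorem hasFDerivAt_constrVel_velocity (x : Conf m r) (v : Fin m → ℝ) (t : ℝ) :
    HasFDerivAt (fun u => constrVel a a0 x u t)
      ((ContinuousLinearMap.snd ℝ _ _).comp (virtualDisp a x t)) v :=
  ((ContinuousLinearMap.snd ℝ _ _).comp (virtualDisp a x t)).hasFDerivAt.add_const
    (fun ν => a0 ν x t)

theorem hasFDerivAt_constrVel_config {x : Conf m r} {t : ℝ}
    (ha : ∀ ν i, DifferentiableAt ℝ (fun y => a ν i y t) x)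
    (ha0 : ∀ ν, DifferentiableAt ℝ (fun y => a0 ν y t) x) (v : Fin m → ℝ) :
    HasFDerivAt (fun y => constrVel a a0 y v t)
      (ContinuousLinearMap.pi fun ν =>
        (∑ j, v j • fderiv ℝ (fun y => a ν j y t) x) + fderiv ℝ (fun y => a0 ν y t) x) x :=
  hasFDerivAt_pi.2 fun ν =>
    (HasFDerivAt.fun_sum fun j _ => (ha ν j).hasFDerivAt.mul_const (v j)).add (ha0 ν).hasFDerivAt

theorem fderiv_eq_pdFib {f : Conf m r → ℝ → ℝ} {x : Conf m r} {t : ℝ}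
    (hf : DifferentiableAt ℝ (fun y => f y t) x) (c : Fin r → ℝ) :
    fderiv ℝ (fun y => f y t) x (0, c) = ∑ μ, c μ * pdFib f x t μ := by
  rw [fderiv_prod_apply hf, map_zero, zero_add, map_eq_sum_smul_single]
  rfl

theorem fderiv_virtualDisp_single {f : Conf m r → ℝ → ℝ} {x : Conf m r} {t : ℝ}
    (hf : DifferentiableAt ℝ (fun y => f y t) x) (i : Fin m) :
    fderiv ℝ (fun y => f y t) x (virtualDisp a x t (Pi.single i 1))
      = pdBase f x t i + ∑ μ, a μ i x t * pdFib f x t μ := by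
  rw [virtualDisp_single, fderiv_prod_apply hf, map_eq_sum_smul_single (fderiv ℝ _ x.2)]
  rfl

end Constraint

section TranspositionDefect

variable {a : Fin r → Fin m → Conf m r → ℝ → ℝ} {a0 : Fin r → Conf m r → ℝ → ℝ}
  {q : ℝ → Conf m r} {v : ℝ → Fin m → ℝ} {t : ℝ}

/-- The defect `d(δq)/dt - δ(q̇)` of the dependent coordinates: virtual displacements and time
derivatives commute along the curve exactly when it vanishes. -/
noncomputable def transpositionDefect (a : Fin r → Fin m → Conf m r → ℝ → ℝ)
    (a0 : Fin r → Conf m r → ℝ → ℝ) (q : ℝ → Conf m r) (v : ℝ → Fin m → ℝ) (t : ℝ)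
    (η : Fin m → ℝ) : Fin r → ℝ :=
  deriv (fun s => (virtualDisp a (q s) s η).2) t
    - fderiv ℝ (fun x => constrVel a a0 x (v t) t) (q t) (virtualDisp a (q t) t η)

theorem coeffA_eq_fderiv {x : Conf m r} {ν : Fin r}
    (ha : ∀ i, DifferentiableAt ℝ (fun y => a ν i y t) x) (i j : Fin m) :
    coeffA a ν i j x t
      = fderiv ℝ (fun y => a ν i y t) x (virtualDisp a x t (Pi.single j 1))
        - fderiv ℝ (fun y => a ν j y t) x (virtualDisp a x t (Pi.single i 1)) := by
  rw [fderiv_virtualDisp_single (ha i), fderiv_virtualDisp_single (ha j), coeffA]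

theorem coeffA0_eq_fderiv {x : Conf m r} {ν : Fin r} {i : Fin m}
    (ha : DifferentiableAt ℝ (fun y => a ν i y t) x)
    (ha0 : DifferentiableAt ℝ (fun y => a0 ν y t) x) :
    coeffA0 a a0 ν i x t
      = deriv (a ν i x) t + fderiv ℝ (fun y => a ν i y t) x (0, fun μ => a0 μ x t)
        - fderiv ℝ (fun y => a0 ν y t) x (virtualDisp a x t (Pi.single i 1)) := by
  rw [fderiv_eq_pdFib ha, fderiv_virtualDisp_single ha0, coeffA0, pdT]

theorem hasDerivAt_virtualDisp_single {i : Fin m}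
    (ha : ∀ ν, DifferentiableAt ℝ (fun p : Conf m r × ℝ => a ν i p.1 p.2) (q t, t))
    (hq : HasDerivAt q (v t, constrVel a a0 (q t) (v t) t) t) :
    HasDerivAt (fun s => (virtualDisp a (q s) s (Pi.single i 1)).2)
      (fun ν =>
        (∑ j, v t j * fderiv ℝ (fun y => a ν i y t) (q t) (virtualDisp a (q t) t (Pi.single j 1)))
          + fderiv ℝ (fun y => a ν i y t) (q t) (0, fun μ => a0 μ (q t) t)
          + deriv (a ν i (q t)) t) t := by
  simp only [virtualDisp_single (a := a) _ _ i]
  refine hasDerivAt_pi.2 fun ν => ?_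
  have h := hasDerivAt_along_curve (ha ν) hq
  rwa [velocity_eq_virtualDisp_add, map_add, ← ContinuousLinearMap.comp_apply _ (virtualDisp _ _ _),
    map_eq_sum_smul_single] at h

theorem transpositionDefect_single
    (ha : ∀ ν i, DifferentiableAt ℝ (fun p : Conf m r × ℝ => a ν i p.1 p.2) (q t, t))
    (ha0 : ∀ ν, DifferentiableAt ℝ (fun x => a0 ν x t) (q t))
    (hq : HasDerivAt q (v t, constrVel a a0 (q t) (v t) t) t) (i : Fin m) :
    transpositionDefect a a0 q v t (Pi.single i 1)
      = fun ν => (∑ j, coeffA a ν i j (q t) t * v t j) + coeffA0 a a0 ν i (q t) t := by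
  have haq : ∀ ν i, DifferentiableAt ℝ (fun x => a ν i x t) (q t) := fun ν i =>
    differentiableAt_slice_left (ha ν i)
  ext ν
  rw [transpositionDefect, (hasDerivAt_virtualDisp_single (fun ν => ha ν i) hq).deriv,
    (hasFDerivAt_constrVel_config haq ha0 (v t)).fderiv, coeffA0_eq_fderiv (haq ν i) (ha0 ν)]
  simp only [coeffA_eq_fderiv (haq ν), sub_mul, Finset.sum_sub_distrib, Pi.sub_apply,
    ContinuousLinearMap.coe_pi', add_apply, sum_apply, smul_apply, smul_eq_mul,
    mul_comm (v t _)]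
  ring

end TranspositionDefect

section Dynamics

variable {L : Conf m r → (Fin m → ℝ) → (Fin r → ℝ) → ℝ → ℝ}
  {a : Fin r → Fin m → Conf m r → ℝ → ℝ} {a0 : Fin r → Conf m r → ℝ → ℝ}
  {fb : Fin m → ℝ} {ff : Fin r → ℝ}
  {q : ℝ → Conf m r} {v : ℝ → Fin m → ℝ} {w : ℝ → Fin r → ℝ} {t : ℝ}

/-- The generalized momentum `∂L/∂q̇` at time `s` along the curve `q` with velocity `(v, w)`,
as a covector. -/
noncomputable def momentum (L : Conf m r → (Fin m → ℝ) → (Fin r → ℝ) → ℝ → ℝ)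
    (q : ℝ → Conf m r) (v : ℝ → Fin m → ℝ) (w : ℝ → Fin r → ℝ) (s : ℝ) : Conf m r →L[ℝ] ℝ :=
  fderiv ℝ (fun u : (Fin m → ℝ) × (Fin r → ℝ) => L (q s) u.1 u.2 s) (v s, w s)

/-- The work of the generalized force with components `fb`, `ff`, as a covector. -/
noncomputable def work (fb : Fin m → ℝ) (ff : Fin r → ℝ) : Conf m r →L[ℝ] ℝ :=
  ((dotProductBilin ℝ ℝ fb).coprod (dotProductBilin ℝ ℝ ff)).toContinuousLinearMap

/-- The covector `∂L/∂q - d/dt(∂L/∂q̇) + F` at time `t`, which d'Alembert's principle requires to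
vanish on virtual displacements. -/
noncomputable def eulerLagrange (L : Conf m r → (Fin m → ℝ) → (Fin r → ℝ) → ℝ → ℝ)
    (fb : Fin m → ℝ) (ff : Fin r → ℝ)
    (q : ℝ → Conf m r) (v : ℝ → Fin m → ℝ) (w : ℝ → Fin r → ℝ) (t : ℝ) : Conf m r →L[ℝ] ℝ :=
  fderiv ℝ (fun x => L x (v t) (w t) t) (q t) - deriv (momentum L q v w) t + work fb ff

theorem work_apply (ξ : Conf m r) :
    work fb ff ξ = (∑ i, fb i * ξ.1 i) + ∑ ν, ff ν * ξ.2 ν := rfl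

theorem differentiable_momentum
    (hL : ContDiff ℝ 2
      (fun p : Conf m r × (Fin m → ℝ) × (Fin r → ℝ) × ℝ => L p.1 p.2.1 p.2.2.1 p.2.2.2))
    (hq : ContDiff ℝ 2 q) (hv : ContDiff ℝ 1 v) (hw : ContDiff ℝ 1 w) :
    Differentiable ℝ (momentum L q v w) := by
  refine (ContDiff.fderiv (m := 2) (n := 1) ?_ (hv.prodMk hw) (by norm_num)).differentiable
    one_ne_zero
  exact hL.comp ((hq.comp contDiff_fst).prodMk
    (contDiff_snd.fst.prodMk (contDiff_snd.snd.prodMk contDiff_fst)))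

theorem eulerLagrange_apply (hp : DifferentiableAt ℝ (momentum L q v w) t) (ξ : Conf m r) :
    eulerLagrange L fb ff q v w t ξ
      = fderiv ℝ (fun x => L x (v t) (w t) t) (q t) ξ - deriv (fun s => momentum L q v w s ξ) t
        + ((∑ i, fb i * ξ.1 i) + ∑ ν, ff ν * ξ.2 ν) := by
  simp [eulerLagrange, work_apply, deriv_clm_apply hp (differentiableAt_const ξ)]

theorem fderiv_constrLag_velocity {x : Conf m r} {u : Fin m → ℝ}
    (hL : DifferentiableAt ℝ (fun p : (Fin m → ℝ) × (Fin r → ℝ) => L x p.1 p.2 t)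
      (u, constrVel a a0 x u t)) (η : Fin m → ℝ) :
    fderiv ℝ (fun u => constrLag L a a0 x u t) u η
      = fderiv ℝ (fun p : (Fin m → ℝ) × (Fin r → ℝ) => L x p.1 p.2 t) (u, constrVel a a0 x u t)
          (virtualDisp a x t η) := by
  have hc := hasFDerivAt_constrVel_velocity (a := a) (a0 := a0) x u t
  refine (fderiv_comp_graph_apply hL hc.differentiableAt η).trans ?_
  rw [hc.fderiv]
  rfl

theorem fderiv_constrLag_config {x : Conf m r} {u : Fin m → ℝ}
    (hL : DifferentiableAt ℝ (fun p : Conf m r × (Fin r → ℝ) => L p.1 u p.2 t)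
      (x, constrVel a a0 x u t))
    (hc : DifferentiableAt ℝ (fun y => constrVel a a0 y u t) x) (ξ : Conf m r) :
    fderiv ℝ (fun y => constrLag L a a0 y u t) x ξ
      = fderiv ℝ (fun y => L y u (constrVel a a0 x u t) t) x ξ
        + fderiv ℝ (fun z => L x u z t) (constrVel a a0 x u t)
            (fderiv ℝ (fun y => constrVel a a0 y u t) x ξ) :=
  (fderiv_comp_graph_apply hL hc ξ).trans (fderiv_prod_apply hL _ _)

theorem deriv_fderiv_constrLag_velocity
    (hL : ∀ s, DifferentiableAt ℝ (fun p : (Fin m → ℝ) × (Fin r → ℝ) => L (q s) p.1 p.2 s)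
      (v s, w s))
    (hadm : ∀ s, w s = constrVel a a0 (q s) (v s) s)
    (hp : DifferentiableAt ℝ (momentum L q v w) t) {η : Fin m → ℝ}
    (hη : DifferentiableAt ℝ (fun s => (virtualDisp a (q s) s η).2) t) :
    deriv (fun s => fderiv ℝ (fun u => constrLag L a a0 (q s) u s) (v s) η) t
      = deriv (momentum L q v w) t (virtualDisp a (q t) t η)
        + fderiv ℝ (fun z => L (q t) (v t) z t) (w t)
            (deriv (fun s => (virtualDisp a (q s) s η).2) t) := by
  have hdisp : HasDerivAt (fun s => virtualDisp a (q s) s η)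
      (0, deriv (fun s => (virtualDisp a (q s) s η).2) t) t :=
    (hasDerivAt_const t η).prodMk hη.hasDerivAt
  have hmomentum : ∀ s, fderiv ℝ (fun u => constrLag L a a0 (q s) u s) (v s) η
      = momentum L q v w s (virtualDisp a (q s) s η) := fun s => by
    rw [fderiv_constrLag_velocity (hadm s ▸ hL s), ← hadm s, momentum]
  simp only [hmomentum, (hp.hasDerivAt.clm_apply hdisp).deriv]
  rw [momentum, fderiv_prod_apply (hL t), map_zero, zero_add]

theorem eulerLagrange_virtualDisp
    (hLvel : ∀ s, DifferentiableAt ℝ (fun p : (Fin m → ℝ) × (Fin r → ℝ) => L (q s) p.1 p.2 s)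
      (v s, w s))
    (hLconf : DifferentiableAt ℝ (fun p : Conf m r × (Fin r → ℝ) => L p.1 (v t) p.2 t) (q t, w t))
    (hadm : ∀ s, w s = constrVel a a0 (q s) (v s) s)
    (hp : DifferentiableAt ℝ (momentum L q v w) t)
    (hc : DifferentiableAt ℝ (fun x => constrVel a a0 x (v t) t) (q t)) {η : Fin m → ℝ}
    (hη : DifferentiableAt ℝ (fun s => (virtualDisp a (q s) s η).2) t) :
    eulerLagrange L fb ff q v w t (virtualDisp a (q t) t η)
      = fderiv ℝ (fun x => constrLag L a a0 x (v t) t) (q t) (virtualDisp a (q t) t η)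
        + work fb ff (virtualDisp a (q t) t η)
        + fderiv ℝ (fun z => L (q t) (v t) z t) (w t) (transpositionDefect a a0 q v t η)
        - deriv (fun s => fderiv ℝ (fun u => constrLag L a a0 (q s) u s) (v s) η) t := by
  rw [deriv_fderiv_constrLag_velocity hLvel hadm hp hη,
    fderiv_constrLag_config (hadm t ▸ hLconf) hc, ← hadm t, transpositionDefect, map_sub,
    eulerLagrange, add_apply, sub_apply]
  ring

theorem eulerLagrange_virtualDisp_single
    (hL : Differentiable ℝ
      (fun p : Conf m r × (Fin m → ℝ) × (Fin r → ℝ) × ℝ => L p.1 p.2.1 p.2.2.1 p.2.2.2))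
    (hp : DifferentiableAt ℝ (momentum L q v w) t)
    (ha : ∀ ν i, DifferentiableAt ℝ (fun p : Conf m r × ℝ => a ν i p.1 p.2) (q t, t))
    (ha0 : ∀ ν, DifferentiableAt ℝ (fun x => a0 ν x t) (q t))
    (hq : HasDerivAt q (v t, w t) t) (hadm : ∀ s, w s = constrVel a a0 (q s) (v s) s) (i : Fin m) :
    eulerLagrange L fb ff q v w t (virtualDisp a (q t) t (Pi.single i 1))
      = pdBase (fun x s => constrLag L a a0 x (v t) s) (q t) t i + fb i
        + (∑ ν, a ν i (q t) t * (pdFib (fun x s => constrLag L a a0 x (v t) s) (q t) t ν + ff ν))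
        + (∑ ν, coeffK L a a0 ν (q t) (v t) t *
            ((∑ j, coeffA a ν i j (q t) t * v t j) + coeffA0 a a0 ν i (q t) t))
        - deriv (fun s =>
            fderiv ℝ (fun u => constrLag L a a0 (q s) u s) (v s) (Pi.single i 1)) t := by
  have hvel : ∀ s, Differentiable ℝ
      (fun p : (Fin m → ℝ) × (Fin r → ℝ) => L (q s) p.1 p.2 s) := fun s =>
    hL.comp (by fun_prop : Differentiable ℝ
      fun p : (Fin m → ℝ) × (Fin r → ℝ) => (q s, p.1, p.2, s))
  have hconf : Differentiable ℝ (fun p : Conf m r × (Fin r → ℝ) => L p.1 (v t) p.2 t) :=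
    hL.comp (by fun_prop : Differentiable ℝ fun p : Conf m r × (Fin r → ℝ) => (p.1, v t, p.2, t))
  have hc :=
    hasFDerivAt_constrVel_config (fun ν i => differentiableAt_slice_left (ha ν i)) ha0 (v t)
  rw [hadm t] at hq
  rw [eulerLagrange_virtualDisp (fun s => hvel s _) (hconf _) hadm hp hc.differentiableAt
      (hasDerivAt_virtualDisp_single (fun ν => ha ν i) hq).differentiableAt,
    transpositionDefect_single ha ha0 hq,
    fderiv_virtualDisp_single (f := fun x s => constrLag L a a0 x (v t) s) ?_,
    map_eq_sum_smul_single (fderiv ℝ _ (w t)), virtualDisp_single, work_apply]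
  · simp only [coeffK, ← hadm t, smul_eq_mul, Pi.single_apply, mul_ite, mul_one, mul_zero,
      Finset.sum_ite_eq', Finset.mem_univ, if_true, mul_add, Finset.sum_add_distrib, mul_comm]
    ring
  · exact (hconf _).comp (q t) (differentiableAt_id.prodMk hc.differentiableAt)

end Dynamics

theorem voronec_equations_general
    (L : Conf m r → (Fin m → ℝ) → (Fin r → ℝ) → ℝ → ℝ)
    (hL : ContDiff ℝ 2
      (fun p : Conf m r × (Fin m → ℝ) × (Fin r → ℝ) × ℝ => L p.1 p.2.1 p.2.2.1 p.2.2.2))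
    (Fb : Conf m r → (Fin m → ℝ) → (Fin r → ℝ) → ℝ → Fin m → ℝ)
    (Ff : Conf m r → (Fin m → ℝ) → (Fin r → ℝ) → ℝ → Fin r → ℝ)
    (a : Fin r → Fin m → Conf m r → ℝ → ℝ) (a0 : Fin r → Conf m r → ℝ → ℝ)
    (ha : ∀ ν i, Differentiable ℝ (fun p : Conf m r × ℝ => a ν i p.1 p.2))
    (ha0 : ∀ ν, Differentiable ℝ (fun p : Conf m r × ℝ => a0 ν p.1 p.2))
    (q : ℝ → Conf m r) (hq : ContDiff ℝ 2 q)
    (hadm : ∀ t, deriv (fun s => (q s).2) t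
      = constrVel a a0 (q t) (deriv (fun s => (q s).1) t) t) (t : ℝ) :
    (∀ η1 : Fin m → ℝ,
      (fderiv ℝ (fun x : Conf m r =>
          L x (deriv (fun s => (q s).1) t) (deriv (fun s => (q s).2) t) t) (q t)
          (η1, fun ν => ∑ i, a ν i (q t) t * η1 i))
        - deriv (fun s =>
            fderiv ℝ (fun v : (Fin m → ℝ) × (Fin r → ℝ) => L (q s) v.1 v.2 s)
              (deriv (fun u => (q u).1) s, deriv (fun u => (q u).2) s)
              (η1, fun ν => ∑ i, a ν i (q t) t * η1 i)) t
        + ((∑ i, Fb (q t) (deriv (fun s => (q s).1) t) (deriv (fun s => (q s).2) t) t i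
              * η1 i)
            + ∑ ν, Ff (q t) (deriv (fun s => (q s).1) t) (deriv (fun s => (q s).2) t) t ν
              * (∑ i, a ν i (q t) t * η1 i)) = 0)
    ↔
    (∀ i : Fin m,
      deriv (fun s =>
        fderiv ℝ (fun v => constrLag L a a0 (q s) v s) (deriv (fun u => (q u).1) s)
          (Pi.single i 1)) t
      = fderiv ℝ (fun y => constrLag L a a0 (y, (q t).2) (deriv (fun u => (q u).1) t) t)
          (q t).1 (Pi.single i 1)
        + Fb (q t) (deriv (fun s => (q s).1) t) (deriv (fun s => (q s).2) t) t i
        + (∑ ν, a ν i (q t) t *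
            (fderiv ℝ
              (fun w => constrLag L a a0 ((q t).1, w) (deriv (fun u => (q u).1) t) t)
              (q t).2 (Pi.single ν 1)
             + Ff (q t) (deriv (fun s => (q s).1) t) (deriv (fun s => (q s).2) t) t ν))
        + ∑ ν, coeffK L a a0 ν (q t) (deriv (fun u => (q u).1) t) t *
            ((∑ j, coeffA a ν i j (q t) t * deriv (fun u => (q u).1) t j)
              + coeffA0 a a0 ν i (q t) t)) := by
  have hv : ContDiff ℝ 1 (deriv fun s => (q s).1) := ContDiff.deriv' hq.fst
  have hw : ContDiff ℝ 1 (deriv fun s => (q s).2) := ContDiff.deriv' hq.snd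
  have hqt : HasDerivAt q (deriv (fun s => (q s).1) t, deriv (fun s => (q s).2) t) t :=
    (hq.fst.differentiable two_ne_zero t).hasDerivAt.prodMk
      (hq.snd.differentiable two_ne_zero t).hasDerivAt
  have hp := differentiable_momentum hL hq hv hw t
  calc
    _ ↔ ∀ η, ((eulerLagrange L (Fb _ _ _ _) (Ff _ _ _ _) q _ _ t).comp
          (virtualDisp a (q t) t)) η = 0 := forall_congr' fun η => by
      rw [ContinuousLinearMap.comp_apply, eulerLagrange_apply hp]
      rfl
    _ ↔ _ := forall_map_eq_zero_iff_single _
    _ ↔ _ := forall_congr' fun i => by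
      rw [ContinuousLinearMap.comp_apply,
        eulerLagrange_virtualDisp_single (hL.differentiable two_ne_zero) hp (fun ν i => ha ν i _)
          (fun ν => differentiableAt_slice_left (ha0 ν _)) hqt hadm i, sub_eq_zero]
      exact eq_comm

/-- The Voronec equations: an admissible smooth curve satisfies the d'Alembert–Lagrange
principle (with virtual displacements `η^{m+ν} = Σ_i a_{νi} η^i`) if and only if it
satisfies the closed-form Voronec equations in the independent velocities `q̇^1,…,q̇^m`. -/
theorem voronec_equations
    (L : Conf m r → (Fin m → ℝ) → (Fin r → ℝ) → ℝ → ℝ)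
    (hL : ContDiff ℝ ∞
      (fun p : Conf m r × (Fin m → ℝ) × (Fin r → ℝ) × ℝ => L p.1 p.2.1 p.2.2.1 p.2.2.2))
    (Fb : Conf m r → (Fin m → ℝ) → (Fin r → ℝ) → ℝ → Fin m → ℝ)
    (Ff : Conf m r → (Fin m → ℝ) → (Fin r → ℝ) → ℝ → Fin r → ℝ)
    (hFb : ContDiff ℝ ∞
      (fun p : Conf m r × (Fin m → ℝ) × (Fin r → ℝ) × ℝ => Fb p.1 p.2.1 p.2.2.1 p.2.2.2))
    (hFf : ContDiff ℝ ∞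
      (fun p : Conf m r × (Fin m → ℝ) × (Fin r → ℝ) × ℝ => Ff p.1 p.2.1 p.2.2.1 p.2.2.2))
    (a : Fin r → Fin m → Conf m r → ℝ → ℝ) (a0 : Fin r → Conf m r → ℝ → ℝ)
    (ha : ∀ ν i, ContDiff ℝ ∞ (fun p : Conf m r × ℝ => a ν i p.1 p.2))
    (ha0 : ∀ ν, ContDiff ℝ ∞ (fun p : Conf m r × ℝ => a0 ν p.1 p.2))
    (q : ℝ → Conf m r) (hq : ContDiff ℝ ∞ q)
    -- the curve is admissible: it satisfies the constraints
    (hadm : ∀ t, deriv (fun s => (q s).2) t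
      = constrVel a a0 (q t) (deriv (fun s => (q s).1) t) t) :
    -- d'Alembert–Lagrange principle
    (∀ t, ∀ η1 : Fin m → ℝ,
      (fderiv ℝ (fun x : Conf m r =>
          L x (deriv (fun s => (q s).1) t) (deriv (fun s => (q s).2) t) t) (q t)
          (η1, fun ν => ∑ i, a ν i (q t) t * η1 i))
        - deriv (fun s =>
            fderiv ℝ (fun v : (Fin m → ℝ) × (Fin r → ℝ) => L (q s) v.1 v.2 s)
              (deriv (fun u => (q u).1) s, deriv (fun u => (q u).2) s)
              (η1, fun ν => ∑ i, a ν i (q t) t * η1 i)) t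
        + ((∑ i, Fb (q t) (deriv (fun s => (q s).1) t) (deriv (fun s => (q s).2) t) t i
              * η1 i)
            + ∑ ν, Ff (q t) (deriv (fun s => (q s).1) t) (deriv (fun s => (q s).2) t) t ν
              * (∑ i, a ν i (q t) t * η1 i)) = 0)
    ↔
    -- the Voronec equations
    (∀ t, ∀ i : Fin m,
      deriv (fun s =>
        fderiv ℝ (fun v => constrLag L a a0 (q s) v s) (deriv (fun u => (q u).1) s)
          (Pi.single i 1)) t
      = fderiv ℝ (fun y => constrLag L a a0 (y, (q t).2) (deriv (fun u => (q u).1) t) t)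
          (q t).1 (Pi.single i 1)
        + Fb (q t) (deriv (fun s => (q s).1) t) (deriv (fun s => (q s).2) t) t i
        + (∑ ν, a ν i (q t) t *
            (fderiv ℝ
              (fun w => constrLag L a a0 ((q t).1, w) (deriv (fun u => (q u).1) t) t)
              (q t).2 (Pi.single ν 1)
             + Ff (q t) (deriv (fun s => (q s).1) t) (deriv (fun s => (q s).2) t) t ν))
        + ∑ ν, coeffK L a a0 ν (q t) (deriv (fun u => (q u).1) t) t *
            ((∑ j, coeffA a ν i j (q t) t * deriv (fun u => (q u).1) t j)
              + coeffA0 a a0 ν i (q t) t)) := by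
  exact forall_congr' (voronec_equations_general L (contDiff_infty.1 hL 2) Fb Ff a a0
    (fun ν i => (ha ν i).differentiable (by simp)) (fun ν => (ha0 ν).differentiable (by simp)) q
    (contDiff_infty.1 hq 2) hadm)

end Voronec
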